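/- (Alternating-sum expression for t(M,M';0,0,1), realizable case.) For every vector configuration v : Fin n → V and every linear map π : V →ₗ[ℝ] W with v' = π ∘ v: t(M,M'; 0, 0, 1) = ∑_{A ⊆ Fin n} (-1)^{θ*_{M'}(A) + θ_M(A)}. -/

import Mathlib

open Set Submodule

/-- The reorientation of the vector configuration `v` on the subset `A`:
vectors indexed by `A` are negated. -/
def reorient {n : ℕ} {V : Type*} [AddCommGroup V] (v : Fin n → V) (A : Finset (Fin n)) :
    Fin n → V :=
  fun i => if i ∈ A then -v i else v i

/-- `a` is orientation-active for the configuration `w`: it is the smallest element of a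
positive circuit, i.e. there is a nonnegative linear dependence with positive coefficient
at `a` and zero coefficients below `a`. -/
def OActive {n : ℕ} {V : Type*} [AddCommGroup V] [Module ℝ V]
    (w : Fin n → V) (a : Fin n) : Prop :=
  ∃ c : Fin n → ℝ, (∀ i, 0 ≤ c i) ∧ (∑ i, c i • w i) = 0 ∧ 0 < c a ∧ ∀ i < a, c i = 0

/-- `a` is dually orientation-active for the configuration `w`: it is the smallest element of
a positive cocircuit, i.e. there is a linear functional, nonnegative on the configuration,
positive at `w a` and vanishing on the vectors below `a`. -/
def ODualActive {n : ℕ} {V : Type*} [AddCommGroup V] [Module ℝ V]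
    (w : Fin n → V) (a : Fin n) : Prop :=
  ∃ f : V →ₗ[ℝ] ℝ, (∀ i, 0 ≤ f (w i)) ∧ 0 < f (w a) ∧ ∀ i < a, f (w i) = 0

/-- `θ*(A)`: the number of elements outside `A` that are dually orientation-active for `v_A`. -/
noncomputable def thetaStar {n : ℕ} {V : Type*} [AddCommGroup V] [Module ℝ V]
    (v : Fin n → V) (A : Finset (Fin n)) : ℕ :=
  {a : Fin n | a ∉ A ∧ ODualActive (reorient v A) a}.ncard

/-- `θ̄*(A)`: the number of elements of `A` that are dually orientation-active for `v_A`. -/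
noncomputable def thetaStarBar {n : ℕ} {V : Type*} [AddCommGroup V] [Module ℝ V]
    (v : Fin n → V) (A : Finset (Fin n)) : ℕ :=
  {a : Fin n | a ∈ A ∧ ODualActive (reorient v A) a}.ncard

/-- `θ(A)`: the number of elements outside `A` that are orientation-active for `v_A`. -/
noncomputable def theta {n : ℕ} {V : Type*} [AddCommGroup V] [Module ℝ V]
    (v : Fin n → V) (A : Finset (Fin n)) : ℕ :=
  {a : Fin n | a ∉ A ∧ OActive (reorient v A) a}.ncard

/-- `θ̄(A)`: the number of elements of `A` that are orientation-active for `v_A`. -/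
noncomputable def thetaBar {n : ℕ} {V : Type*} [AddCommGroup V] [Module ℝ V]
    (v : Fin n → V) (A : Finset (Fin n)) : ℕ :=
  {a : Fin n | a ∈ A ∧ OActive (reorient v A) a}.ncard

/-- The rank of a set of indices: the dimension of the span of the corresponding vectors. -/
noncomputable def vrank {n : ℕ} {V : Type*} [AddCommGroup V] [Module ℝ V]
    (v : Fin n → V) (S : Set (Fin n)) : ℕ :=
  Module.finrank ℝ ↥(span ℝ (v '' S))

/-- The Tutte polynomial of the matroid realized by the configuration `v`:
`t(x,y) = ∑_{A ⊆ Fin n} (x-1)^(r(E) - r(A)) * (y-1)^(|A| - r(A))`. -/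
noncomputable def tutteV {n : ℕ} {V : Type*} [AddCommGroup V] [Module ℝ V]
    (v : Fin n → V) (x y : ℝ) : ℝ :=
  ∑ A : Finset (Fin n),
    (x - 1) ^ (vrank v Set.univ - vrank v ↑A) * (y - 1) ^ (A.card - vrank v ↑A)

/-- The evaluation at `z = 1` of the 3-variable Tutte polynomial of the oriented matroid
perspective realized by the configurations `v` (for `M`) and `v'` (for `M'`):
`t(M,M';x,y,1) = ∑_{A ⊆ Fin n} (x-1)^(r'(E) - r'(A)) * (y-1)^(|A| - r(A))`. -/
noncomputable def tuttePerspV {n : ℕ} {V W : Type*} [AddCommGroup V] [Module ℝ V]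
    [AddCommGroup W] [Module ℝ W] (v : Fin n → V) (v' : Fin n → W) (x y : ℝ) : ℝ :=
  ∑ A : Finset (Fin n),
    (x - 1) ^ (vrank v' Set.univ - vrank v' ↑A) * (y - 1) ^ (A.card - vrank v ↑A)

/-!
Only two subspaces of `ℝⁿ` matter: the space `L` of linear dependencies of `v`, and the space `K`
of value vectors `i ↦ f (v' i)` of linear functionals `f` on `W`. They are orthogonal because
`v' = π ∘ v`. The ranks and the activities are read off from `K` and `L`, and the Tutte polynomial
at `(x + u, y + w)` and the activity expansion with weights `x, u, y, w` satisfy the same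
deletion–contraction recursion at the greatest element `e`. On the activity side the point is that
one of the two signs of `e` makes the activities of `L` those of the deletion and the other makes
them those of the contraction (two counterexamples with opposite signs could be eliminated at `e`),
and that orthogonality allows the choices for `K` and `L` to be opposite. The alternating sum is the
case `x = y = -1`, `u = w = 1`.
-/

namespace Perspective

open Module Pi
open scoped symmDiff

section Minors

variable {ι 𝕜 : Type*} [Field 𝕜] {e : ι} {K L : Submodule 𝕜 (ι → 𝕜)} {c : ι → 𝕜}

/-- The deletion of `e` from a subspace of `ι → 𝕜`, regarded as a space of dependencies. It stays
in the same ambient space, its elements being zero at `e`. -/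
def deletion (e : ι) (L : Submodule 𝕜 (ι → 𝕜)) : Submodule 𝕜 (ι → 𝕜) :=
  L ⊓ LinearMap.ker (LinearMap.proj e)

lemma mem_deletion : c ∈ deletion e L ↔ c ∈ L ∧ c e = 0 := by
  simp [deletion]

lemma apply_eq_zero_of_mem_deletion (e : ι) (L : Submodule 𝕜 (ι → 𝕜)) :
    ∀ c ∈ deletion e L, c e = 0 :=
  fun _ hc => (mem_deletion.1 hc).2

variable [DecidableEq ι]

/-- The linear projection replacing the coordinate `e` by `0`. -/
def eraseCoord (e : ι) : (ι → 𝕜) →ₗ[𝕜] (ι → 𝕜) where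
  toFun c := Function.update c e 0
  map_add' c d := by rw [← Function.update_add, add_zero]
  map_smul' r c := by rw [RingHom.id_apply, ← Function.update_smul, smul_zero]

/-- The contraction of `e` in a subspace of `ι → 𝕜`, regarded as a space of dependencies. It stays
in the same ambient space, its elements being zero at `e`. -/
def contraction (e : ι) (L : Submodule 𝕜 (ι → 𝕜)) : Submodule 𝕜 (ι → 𝕜) :=
  L.map (eraseCoord e)

lemma mem_ker_eraseCoord : c ∈ LinearMap.ker (eraseCoord e) ↔ ∀ i ≠ e, c i = 0 := by
  refine ⟨fun h i hi => ?_, fun h => funext fun i => ?_⟩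
  · simpa [eraseCoord, hi] using congrFun h i
  · by_cases hi : i = e <;> simp [eraseCoord, hi, h i]

lemma mem_contraction : c ∈ contraction e L ↔ ∃ d ∈ L, Function.update d e 0 = c := by
  simp [contraction, eraseCoord]

lemma apply_eq_zero_of_mem_contraction (e : ι) (L : Submodule 𝕜 (ι → 𝕜)) :
    ∀ c ∈ contraction e L, c e = 0 := by
  intro c hc
  obtain ⟨d, -, rfl⟩ := mem_contraction.1 hc
  exact Function.update_self ..

lemma deletion_le_contraction : deletion e L ≤ contraction e L := by
  intro c hc
  obtain ⟨hcL, hce⟩ := mem_deletion.1 hc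
  exact mem_contraction.2 ⟨c, hcL, by rw [← hce, Function.update_eq_self]⟩

lemma contraction_eq_deletion_of_single_mem (he : single e (1 : 𝕜) ∈ L) :
    contraction e L = deletion e L := by
  refine le_antisymm (fun c hc => ?_) deletion_le_contraction
  obtain ⟨d, hd, rfl⟩ := mem_contraction.1 hc
  have hupdate : Function.update d e 0 = d - d e • single e (1 : 𝕜) := by
    ext i
    by_cases hi : i = e <;> simp [hi]
  exact mem_deletion.2 ⟨hupdate ▸ L.sub_mem hd (L.smul_mem _ he), Function.update_self ..⟩

lemma contraction_eq_deletion_of_apply_eq_zero (he : ∀ c ∈ L, c e = 0) :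
    contraction e L = deletion e L := by
  refine le_antisymm (fun c hc => ?_) deletion_le_contraction
  obtain ⟨d, hd, rfl⟩ := mem_contraction.1 hc
  have hupdate : Function.update d e 0 = d := by rw [← he d hd, Function.update_eq_self]
  exact mem_deletion.2 ⟨hupdate.symm ▸ hd, Function.update_self ..⟩

lemma single_mem_iff : single e (1 : 𝕜) ∈ L ↔ ∃ c ∈ L, c e ≠ 0 ∧ ∀ i ≠ e, c i = 0 := by
  refine ⟨fun h => ⟨_, h, by simp, fun i hi => by simp [hi]⟩, fun ⟨c, hcL, hce, hc⟩ => ?_⟩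
  convert L.smul_mem (c e)⁻¹ hcL using 1
  ext i
  by_cases hi : i = e
  · simp [hi, hce]
  · simp [hi, hc i hi]

variable [Finite ι] {s : Finset ι}

lemma deletion_le_spanSubset (hL : L ≤ spanSubset 𝕜 (insert e s : Finset ι)) :
    deletion e L ≤ spanSubset 𝕜 (s : Set ι) := by
  intro c hc
  obtain ⟨hcL, hce⟩ := mem_deletion.1 hc
  refine mem_spanSubset_iff.2 fun i hi => ?_
  by_cases hie : i = e
  · rwa [hie]
  · exact mem_spanSubset_iff.1 (hL hcL) i (by simp_all)

lemma contraction_le_spanSubset (hL : L ≤ spanSubset 𝕜 (insert e s : Finset ι)) :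
    contraction e L ≤ spanSubset 𝕜 (s : Set ι) := by
  intro c hc
  obtain ⟨d, hdL, rfl⟩ := mem_contraction.1 hc
  refine mem_spanSubset_iff.2 fun i hi => ?_
  by_cases hie : i = e
  · rw [hie, Function.update_self]
  · rw [Function.update_of_ne hie]
    exact mem_spanSubset_iff.1 (hL hdL) i (by simp_all)

end Minors

section Orthogonality

variable {ι 𝕜 : Type*} [Fintype ι] [Field 𝕜] {e : ι} {K L : Submodule 𝕜 (ι → 𝕜)}

/-- Orthogonality of two subspaces of `ι → 𝕜` for the dot product: what remains of a perspective
`M → M'` when it is encoded by the dependencies of `M` and the value vectors of `M'`. -/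
def Orthogonal (K L : Submodule 𝕜 (ι → 𝕜)) : Prop :=
  ∀ k ∈ K, ∀ l ∈ L, k ⬝ᵥ l = 0

lemma Orthogonal.symm (h : Orthogonal K L) : Orthogonal L K := fun l hl k hk =>
  (dotProduct_comm l k).trans (h k hk l hl)

variable [DecidableEq ι]

lemma Orthogonal.contraction_deletion (h : Orthogonal K L) :
    Orthogonal (contraction e K) (deletion e L) := by
  intro k hk l hl
  obtain ⟨k', hk', rfl⟩ := mem_contraction.1 hk
  obtain ⟨hlL, hle⟩ := mem_deletion.1 hl
  rw [← h k' hk' l hlL]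
  refine Finset.sum_congr rfl fun i _ => ?_
  by_cases hi : i = e <;> simp [hi, hle]

lemma Orthogonal.deletion_contraction (h : Orthogonal K L) :
    Orthogonal (deletion e K) (contraction e L) :=
  h.symm.contraction_deletion.symm

lemma Orthogonal.apply_eq_zero (h : Orthogonal K L) (he : single e (1 : 𝕜) ∈ L) :
    ∀ k ∈ K, k e = 0 := fun k hk => by
  simpa using h k hk _ he

lemma Orthogonal.single_notMem (h : Orthogonal K L) (he : single e (1 : 𝕜) ∈ L) :
    single e (1 : 𝕜) ∉ K := fun hK => by
  simpa using h.apply_eq_zero he _ hK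

end Orthogonality

section Nullity

lemma finrank_map_add_finrank_inf_ker {𝕜 V W : Type*} [DivisionRing 𝕜] [AddCommGroup V]
    [Module 𝕜 V] [AddCommGroup W] [Module 𝕜 W] (f : V →ₗ[𝕜] W) (p : Submodule 𝕜 V)
    [FiniteDimensional 𝕜 p] :
    finrank 𝕜 (p.map f) + finrank 𝕜 ↥(p ⊓ LinearMap.ker f) = finrank 𝕜 p := by
  rw [← (f.domRestrict p).finrank_range_add_finrank_ker, LinearMap.range_domRestrict,
    ← finrank_map_subtype_eq p, LinearMap.domRestrict, LinearMap.ker_comp, map_comap_subtype]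

variable {ι 𝕜 : Type*} [Finite ι] [Field 𝕜] {e : ι} {L : Submodule 𝕜 (ι → 𝕜)}

/-- The dimension of the space of elements of `L` supported on `B`. When `L` is the space of
dependencies of a configuration, this is the nullity of `B`. -/
noncomputable def nullityOn (L : Submodule 𝕜 (ι → 𝕜)) (B : Set ι) : ℕ :=
  finrank 𝕜 ↥(L ⊓ spanSubset 𝕜 B)

lemma nullityOn_deletion (B : Set ι) : nullityOn (deletion e L) B = nullityOn L (B \ {e}) := by
  suffices h : deletion e L ⊓ spanSubset 𝕜 B = L ⊓ spanSubset 𝕜 (B \ {e}) by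
    rw [nullityOn, nullityOn, h]
  ext c
  simp only [mem_inf, mem_deletion, mem_spanSubset_iff, Set.mem_sdiff, Set.mem_singleton_iff,
    not_and_not_right, and_assoc]
  refine and_congr_right fun _ => ⟨fun ⟨hce, hc⟩ i hi => ?_, fun hc => ⟨hc e (by simp), ?_⟩⟩
  · by_cases hiB : i ∈ B
    · rwa [hi hiB]
    · exact hc i hiB
  · exact fun i hi => hc i (absurd · hi)

lemma nullityOn_bot (B : Set ι) : nullityOn (⊥ : Submodule 𝕜 (ι → 𝕜)) B = 0 := by
  rw [nullityOn, bot_inf_eq, finrank_bot]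

variable [DecidableEq ι]

lemma nullityOn_insert (B : Set ι) :
    nullityOn L (insert e B) = nullityOn (contraction e L) B + nullityOn L {e} := by
  have hmap : (L ⊓ spanSubset 𝕜 (insert e B)).map (eraseCoord e)
      = contraction e L ⊓ spanSubset 𝕜 B := by
    ext c
    simp only [Submodule.mem_map, mem_inf, mem_contraction, mem_spanSubset_iff]
    constructor
    · rintro ⟨d, ⟨hdL, hd⟩, rfl⟩
      refine ⟨⟨d, hdL, rfl⟩, fun i hi => ?_⟩
      by_cases hie : i = e <;> simp_all [eraseCoord]
    · rintro ⟨⟨d, hdL, rfl⟩, hd⟩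
      refine ⟨d, ⟨hdL, fun i hi => ?_⟩, rfl⟩
      have hi' : i ≠ e ∧ i ∉ B := by simpa using hi
      simpa [hi'.1] using hd i hi'.2
  have hker : L ⊓ spanSubset 𝕜 (insert e B) ⊓ LinearMap.ker (eraseCoord e)
      = L ⊓ spanSubset 𝕜 {e} := by
    ext c
    simp only [mem_inf, mem_ker_eraseCoord, mem_spanSubset_iff, Set.mem_insert_iff,
      Set.mem_singleton_iff, not_or, and_assoc]
    exact and_congr_right fun _ => ⟨And.right, fun h => ⟨fun i hi => h i hi.1, h⟩⟩
  unfold nullityOn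
  rw [← finrank_map_add_finrank_inf_ker (eraseCoord e), hmap, hker]

lemma nullityOn_singleton_of_mem (he : single e (1 : 𝕜) ∈ L) : nullityOn L {e} = 1 := by
  have hle : spanSubset 𝕜 {e} ≤ L := by
    rw [spanSubset, Set.image_singleton, span_singleton_le_iff_mem, basisFun_apply]
    exact he
  rw [nullityOn, inf_eq_right.2 hle, dim_spanSubset, Set.ncard_singleton]

lemma nullityOn_singleton_of_notMem (he : single e (1 : 𝕜) ∉ L) : nullityOn L {e} = 0 := by
  have hbot : L ⊓ spanSubset 𝕜 {e} = ⊥ := by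
    refine (Submodule.eq_bot_iff _).2 fun c ⟨hcL, hc⟩ => ?_
    have hce : ∀ i ≠ e, c i = 0 := mem_spanSubset_iff.1 hc
    by_contra hne
    obtain ⟨i, hi⟩ := Function.ne_iff.1 hne
    have hie : i = e := not_imp_comm.1 (hce i) hi
    exact he (single_mem_iff.2 ⟨c, hcL, hie ▸ hi, hce⟩)
  rw [nullityOn, hbot, finrank_bot]

end Nullity

section SubspaceTutte

variable {ι 𝕜 R : Type*} [Fintype ι] [DecidableEq ι] [Field 𝕜] [CommSemiring R]
  {e : ι} {s : Finset ι} {K L : Submodule 𝕜 (ι → 𝕜)} {a b : R}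

/-- The Tutte polynomial of the perspective on the ground set `s` with space of dependencies `L`
and space of value vectors `K`, as a function of `a = x - 1` and `b = y - 1`. -/
noncomputable def subspaceTutte (s : Finset ι) (K L : Submodule 𝕜 (ι → 𝕜)) (a b : R) : R :=
  ∑ A ∈ s.powerset, a ^ nullityOn K (↑A)ᶜ * b ^ nullityOn L ↑A

lemma subspaceTutte_insert (he : e ∉ s) :
    subspaceTutte (insert e s) K L a b =
      a ^ nullityOn K {e} * subspaceTutte s (contraction e K) (deletion e L) a b +
      b ^ nullityOn L {e} * subspaceTutte s (deletion e K) (contraction e L) a b := by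
  unfold subspaceTutte
  rw [Finset.sum_powerset_insert he, Finset.mul_sum, Finset.mul_sum]
  congr 1 <;> refine Finset.sum_congr rfl fun A hA => ?_
  all_goals have heA : e ∉ A := fun h => he (Finset.mem_powerset.1 hA h)
  · rw [nullityOn_deletion, Set.sdiff_singleton_eq_self (by simpa using heA),
      ← Set.insert_eq_of_mem (show e ∈ ((A : Set ι))ᶜ by simpa using heA), nullityOn_insert,
      Set.insert_eq_of_mem (show e ∈ ((A : Set ι))ᶜ by simpa using heA)]
    ring
  · have hcompl : ((insert e A : Finset ι) : Set ι)ᶜ = (↑A)ᶜ \ {e} := by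
      ext i
      simp [and_comm]
    rw [hcompl, ← nullityOn_deletion, Finset.coe_insert, nullityOn_insert]
    ring

end SubspaceTutte

section Conformal

variable {ι 𝕜 : Type*} [DecidableEq ι] [Field 𝕜] [LinearOrder 𝕜] {e : ι} {A B : Finset ι}
  {c d : ι → 𝕜}

/-- The vector `c` lies in the closed orthant of `A`: after reorientation on `A` all its coordinates
are nonnegative. -/
def IsConformal (A : Finset ι) (c : ι → 𝕜) : Prop :=
  ∀ i, if i ∈ A then c i ≤ 0 else 0 ≤ c i

lemma mem_iff_of_symmDiff_eq_singleton (hAB : A ∆ B = {e}) {i : ι} (hi : i ≠ e) :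
    i ∈ A ↔ i ∈ B := by
  have := Finset.ext_iff.1 hAB i
  simp only [Finset.mem_symmDiff, Finset.mem_singleton, hi] at this
  tauto

lemma mem_iff_notMem_of_symmDiff_eq_singleton (hAB : A ∆ B = {e}) : e ∈ A ↔ e ∉ B := by
  have := Finset.ext_iff.1 hAB e
  simp only [Finset.mem_symmDiff, Finset.mem_singleton] at this
  tauto

lemma symmDiff_insert_self (he : e ∉ A) : A ∆ insert e A = {e} := by
  ext i
  simp only [Finset.mem_symmDiff, Finset.mem_insert, Finset.mem_singleton]
  grind

lemma IsConformal.update_zero (hc : IsConformal A c) (e : ι) :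
    IsConformal A (Function.update c e 0) := fun i => by
  by_cases hi : i = e
  · simp [hi]
  · simpa [hi] using hc i

lemma IsConformal.congr_of_apply_eq_zero (hc : IsConformal A c) (hAB : A ∆ B = {e})
    (he : c e = 0) : IsConformal B c := fun i => by
  by_cases hi : i = e
  · simp [hi, he]
  · simpa [mem_iff_of_symmDiff_eq_singleton hAB hi] using hc i

lemma isConformal_or_of_update_zero (hAB : A ∆ B = {e})
    (hc : IsConformal A (Function.update c e 0)) : IsConformal A c ∨ IsConformal B c := by
  have hoff : ∀ i ≠ e, if i ∈ A then c i ≤ 0 else 0 ≤ c i := fun i hi => by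
    simpa [hi] using hc i
  have hiff := mem_iff_notMem_of_symmDiff_eq_singleton hAB
  by_cases he : if e ∈ A then c e ≤ 0 else 0 ≤ c e
  · left
    intro i
    by_cases hi : i = e
    · exact hi ▸ he
    · exact hoff i hi
  · right
    intro i
    by_cases hi : i = e
    · subst hi
      by_cases hiB : i ∈ B <;> simp_all [le_of_lt]
    · simpa [mem_iff_of_symmDiff_eq_singleton hAB hi] using hoff i hi

variable [IsStrictOrderedRing 𝕜]

lemma IsConformal.mul_nonneg (hc : IsConformal A c) (hd : IsConformal B d) {i : ι}
    (hi : i ∈ A ↔ i ∈ B) : 0 ≤ c i * d i := by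
  have hci := hc i
  have hdi := hd i
  rw [if_congr hi rfl rfl] at hci
  split_ifs at hci hdi
  · exact mul_nonneg_of_nonpos_of_nonpos hci hdi
  · exact _root_.mul_nonneg hci hdi

lemma IsConformal.eq_zero_or_eq_zero_of_dotProduct_eq_zero [Fintype ι] (hc : IsConformal A c)
    (hd : IsConformal A d) (h : c ⬝ᵥ d = 0) (i : ι) : c i = 0 ∨ d i = 0 :=
  mul_eq_zero.1 <| (Finset.sum_eq_zero_iff_of_nonneg fun _ _ => hc.mul_nonneg hd Iff.rfl).1 h i
    (Finset.mem_univ i)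

/-- The combination of `c` and `d` in which their coordinates at `e` cancel, provided that these
have opposite signs. -/
def eliminate (e : ι) (c d : ι → 𝕜) : ι → 𝕜 :=
  fun i => |d e| * c i + |c e| * d i

lemma IsConformal.eliminate_self (hc : IsConformal A c) (hd : IsConformal B d)
    (hAB : A ∆ B = {e}) : eliminate e c d e = 0 := by
  have hce := hc e
  have hde := hd e
  rw [if_congr (mem_iff_notMem_of_symmDiff_eq_singleton hAB) rfl rfl] at hce
  by_cases he : e ∈ B
  · simp only [he, not_true_eq_false, if_false, if_true] at hce hde
    rw [eliminate, abs_of_nonneg hce, abs_of_nonpos hde]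
    ring
  · simp only [he, not_false_eq_true, if_false, if_true] at hce hde
    rw [eliminate, abs_of_nonneg hde, abs_of_nonpos hce]
    ring

lemma isConformal_eliminate (hc : IsConformal A c) (hd : IsConformal B d) (hAB : A ∆ B = {e}) :
    IsConformal A (eliminate e c d) := fun i => by
  by_cases hi : i = e
  · simp [hi, hc.eliminate_self hd hAB]
  · have hci := hc i
    have hdi := hd i
    rw [← if_congr (mem_iff_of_symmDiff_eq_singleton hAB hi) rfl rfl] at hdi
    unfold eliminate
    split_ifs at hci hdi ⊢
    · exact add_nonpos (mul_nonpos_of_nonneg_of_nonpos (abs_nonneg _) hci)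
        (mul_nonpos_of_nonneg_of_nonpos (abs_nonneg _) hdi)
    · exact add_nonneg (_root_.mul_nonneg (abs_nonneg _) hci)
        (_root_.mul_nonneg (abs_nonneg _) hdi)

lemma eliminate_apply_ne_zero (hc : IsConformal A c) (hd : IsConformal B d) {i : ι}
    (hi : i ∈ A ↔ i ∈ B) (hde : d e ≠ 0) (hci : c i ≠ 0) : eliminate e c d i ≠ 0 := by
  have hpos : 0 < c i * eliminate e c d i :=
    calc 0 < |d e| * (c i * c i) + |c e| * (c i * d i) :=
          add_pos_of_pos_of_nonneg (mul_pos (abs_pos.2 hde) (mul_self_pos.2 hci))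
            (_root_.mul_nonneg (abs_nonneg _) (hc.mul_nonneg hd hi))
      _ = c i * eliminate e c d i := by rw [eliminate]; ring
  exact right_ne_zero_of_mul hpos.ne'

end Conformal

section Activity

variable {ι 𝕜 : Type*} [LinearOrder ι] [Field 𝕜] {e a : ι} {A B : Finset ι}
  {K L M : Submodule 𝕜 (ι → 𝕜)}

lemma apply_eq_zero_of_le_spanSubset_Iic [Finite ι]
    (hL : L ≤ spanSubset 𝕜 (Set.Iic e)) {c : ι → 𝕜} (hc : c ∈ L) {i : ι} (hi : e < i) : c i = 0 :=
  mem_spanSubset_iff.1 (hL hc) i (not_le.2 hi)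

variable [LinearOrder 𝕜]

/-- After reorientation on `A`, the element `a` is the first one of the support of a nonnegative
element of `L`. For the space of dependencies of a configuration this is orientation activity, and
for its space of value vectors it is dual orientation activity. -/
def IsActive (L : Submodule 𝕜 (ι → 𝕜)) (A : Finset ι) (a : ι) : Prop :=
  ∃ c ∈ L, IsConformal A c ∧ c a ≠ 0 ∧ ∀ i < a, c i = 0

lemma IsActive.mono (hLM : L ≤ M) (h : IsActive L A a) : IsActive M A a := by
  obtain ⟨c, hcL, hc⟩ := h
  exact ⟨c, hLM hcL, hc⟩

lemma IsActive.deletion_le (h : IsActive (deletion e L) A a) : IsActive L A a :=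
  h.mono inf_le_left

lemma not_isActive_of_apply_eq_zero (hL : ∀ c ∈ L, c e = 0) : ¬ IsActive L A e :=
  fun ⟨c, hcL, _, hce, _⟩ => hce (hL c hcL)

lemma isActive_congr_of_apply_eq_zero (hL : ∀ c ∈ L, c e = 0) (hAB : A ∆ B = {e}) :
    IsActive L A a ↔ IsActive L B a :=
  ⟨fun ⟨c, hcL, hcA, hc⟩ => ⟨c, hcL, hcA.congr_of_apply_eq_zero hAB (hL c hcL), hc⟩,
    fun ⟨c, hcL, hcB, hc⟩ =>
      ⟨c, hcL, hcB.congr_of_apply_eq_zero (symmDiff_comm A B ▸ hAB) (hL c hcL), hc⟩⟩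

lemma IsActive.contraction (ha : a ≠ e) (h : IsActive L A a) : IsActive (contraction e L) A a := by
  obtain ⟨c, hcL, hcA, hca, hc⟩ := h
  refine ⟨_, mem_contraction.2 ⟨c, hcL, rfl⟩, hcA.update_zero e, by simpa [ha] using hca, ?_⟩
  intro i hi
  by_cases hie : i = e
  · rw [hie, Function.update_self]
  · rw [Function.update_of_ne hie, hc i hi]

section Greatest

variable [Finite ι]

lemma isActive_or_of_contraction (hL : L ≤ spanSubset 𝕜 (Set.Iic e)) (hAB : A ∆ B = {e})
    (h : IsActive (contraction e L) A a) : IsActive L A a ∨ IsActive L B a := by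
  have hae : a ≠ e := fun hae =>
    not_isActive_of_apply_eq_zero (apply_eq_zero_of_mem_contraction _ _) (hae ▸ h)
  obtain ⟨c, hcL, hcA, hca, hc⟩ := h
  obtain ⟨d, hdL, rfl⟩ := mem_contraction.1 hcL
  rw [Function.update_of_ne hae] at hca
  have hlt : a < e := by
    refine hae.lt_or_gt.resolve_right fun hea => hca ?_
    exact apply_eq_zero_of_le_spanSubset_Iic hL hdL hea
  have hd : ∀ i < a, d i = 0 := fun i hi => by
    simpa [(hi.trans hlt).ne] using hc i hi
  exact (isConformal_or_of_update_zero hAB hcA).imp (fun hdA => ⟨d, hdL, hdA, hca, hd⟩)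
    fun hdB => ⟨d, hdL, hdB, hca, hd⟩

lemma isActive_greatest_iff [IsStrictOrderedRing 𝕜] (hL : L ≤ spanSubset 𝕜 (Set.Iic e)) :
    IsActive L A e ↔ single e (1 : 𝕜) ∈ L := by
  constructor
  · rintro ⟨c, hcL, -, hce, hc⟩
    refine single_mem_iff.2 ⟨c, hcL, hce, fun i hi => ?_⟩
    exact hi.lt_or_gt.elim (hc i) (apply_eq_zero_of_le_spanSubset_Iic hL hcL)
  · intro he
    refine ⟨(if e ∈ A then (-1 : 𝕜) else 1) • single e (1 : 𝕜), L.smul_mem _ he, fun i => ?_, ?_,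
      fun i hi => by simp [hi.ne]⟩
    · by_cases hi : i = e
      · subst hi
        by_cases hiA : i ∈ A <;> simp [hiA]
      · simp [hi]
    · by_cases heA : e ∈ A <;> simp [heA]

end Greatest

/-- Apart from `e` itself, the reorientation on `A` has no more active elements in `L` than in
the deletion of `e`. -/
def IsDeletionSide (e : ι) (L : Submodule 𝕜 (ι → 𝕜)) (A : Finset ι) : Prop :=
  ∀ a ≠ e, IsActive L A a → IsActive (deletion e L) A a

lemma IsDeletionSide.isActive_iff_deletion (h : IsDeletionSide e L A) (ha : a ≠ e) :
    IsActive L A a ↔ IsActive (deletion e L) A a :=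
  ⟨h a ha, IsActive.deletion_le⟩

lemma IsDeletionSide.isActive_iff_contraction [Finite ι] (h : IsDeletionSide e L A)
    (hL : L ≤ spanSubset 𝕜 (Set.Iic e)) (hAB : A ∆ B = {e}) (ha : a ≠ e) :
    IsActive L B a ↔ IsActive (contraction e L) B a := by
  refine ⟨IsActive.contraction ha, fun hB => ?_⟩
  refine (isActive_or_of_contraction hL (symmDiff_comm A B ▸ hAB) hB).elim id fun hA => ?_
  exact ((isActive_congr_of_apply_eq_zero (apply_eq_zero_of_mem_deletion _ _) hAB).1
    (h a ha hA)).deletion_le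

lemma exists_apply_ne_zero_of_not_isDeletionSide (h : ¬ IsDeletionSide e L A) :
    ∃ a ≠ e, ¬ IsActive (deletion e L) A a ∧
      ∃ c ∈ L, IsConformal A c ∧ c e ≠ 0 ∧ c a ≠ 0 ∧ ∀ i < a, c i = 0 := by
  unfold IsDeletionSide at h
  push Not at h
  obtain ⟨a, hae, ⟨c, hcL, hcA, hca, hc⟩, hdel⟩ := h
  refine ⟨a, hae, hdel, c, hcL, hcA, fun hce => hdel ?_, hca, hc⟩
  exact ⟨c, mem_deletion.2 ⟨hcL, hce⟩, hcA, hca, hc⟩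

variable [IsStrictOrderedRing 𝕜]

lemma isActive_deletion_of_opposite {c d : ι → 𝕜} (hcL : c ∈ L) (hdL : d ∈ L)
    (hcA : IsConformal A c) (hdB : IsConformal B d) (hAB : A ∆ B = {e}) (hde : d e ≠ 0)
    (hae : a ≠ e) (hca : c a ≠ 0) (hc : ∀ i < a, c i = 0) (hd : ∀ i < a, d i = 0) :
    IsActive (deletion e L) A a := by
  refine ⟨eliminate e c d, mem_deletion.2 ⟨?_, hcA.eliminate_self hdB hAB⟩,
    isConformal_eliminate hcA hdB hAB,
    eliminate_apply_ne_zero hcA hdB (mem_iff_of_symmDiff_eq_singleton hAB hae) hde hca,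
    fun i hi => by simp [eliminate, hc i hi, hd i hi]⟩
  exact L.add_mem (L.smul_mem |d e| hcL) (L.smul_mem |c e| hdL)

lemma isDeletionSide_or_of_symmDiff (hAB : A ∆ B = {e}) :
    IsDeletionSide e L A ∨ IsDeletionSide e L B := by
  by_contra! ⟨hA, hB⟩
  obtain ⟨a, hae, hadel, c, hcL, hcA, hce, hca, hc⟩ :=
    exists_apply_ne_zero_of_not_isDeletionSide hA
  obtain ⟨b, hbe, hbdel, d, hdL, hdB, hde, hdb, hd⟩ :=
    exists_apply_ne_zero_of_not_isDeletionSide hB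
  rcases le_total a b with hab | hba
  · exact hadel (isActive_deletion_of_opposite hcL hdL hcA hdB hAB hde hae hca hc
      fun i hi => hd i (hi.trans_le hab))
  · exact hbdel (isActive_deletion_of_opposite hdL hcL hdB hcA (symmDiff_comm A B ▸ hAB) hce hbe
      hdb hd fun i hi => hc i (hi.trans_le hba))

lemma Orthogonal.isDeletionSide_or [Fintype ι] (h : Orthogonal K L) :
    IsDeletionSide e K A ∨ IsDeletionSide e L A := by
  by_contra! ⟨hK, hL⟩
  obtain ⟨-, -, -, c, hcK, hcA, hce, -⟩ := exists_apply_ne_zero_of_not_isDeletionSide hK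
  obtain ⟨-, -, -, d, hdL, hdA, hde, -⟩ := exists_apply_ne_zero_of_not_isDeletionSide hL
  exact (hcA.eq_zero_or_eq_zero_of_dotProduct_eq_zero hdA (h c hcK d hdL) e).elim hce hde

lemma Orthogonal.exists_opposite_isDeletionSide [Fintype ι] (h : Orthogonal K L)
    (hAB : A ∆ B = {e}) :
    IsDeletionSide e K A ∧ IsDeletionSide e L B ∨
      IsDeletionSide e K B ∧ IsDeletionSide e L A := by
  have hK := isDeletionSide_or_of_symmDiff (L := K) hAB
  have hL := isDeletionSide_or_of_symmDiff (L := L) hAB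
  have hA := h.isDeletionSide_or (e := e) (A := A)
  have hB := h.isDeletionSide_or (e := e) (A := B)
  tauto

end Activity

section ActivitySum

variable {ι 𝕜 R : Type*} [Fintype ι] [LinearOrder ι] [Field 𝕜] [LinearOrder 𝕜] {e : ι}
  {s A B : Finset ι} {K L M : Submodule 𝕜 (ι → 𝕜)}

open Classical in
/-- The product of a factor `x` for every active element outside `A` and a factor `y` for every
active element of `A`. -/
noncomputable def activityWeight [CommSemiring R] (L : Submodule 𝕜 (ι → 𝕜)) (A : Finset ι)
    (x y : R) : R :=
  ∏ a, if IsActive L A a then if a ∈ A then y else x else 1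

/-- The expansion by activities attached to the spaces `K` and `L` on the ground set `s`. -/
noncomputable def activitySum [CommSemiring R] (s : Finset ι) (K L : Submodule 𝕜 (ι → 𝕜))
    (x u y w : R) : R :=
  ∑ A ∈ s.powerset, activityWeight K A x u * activityWeight L A y w

section CommSemiring

variable [CommSemiring R] {x y u w : R}

open Classical in
lemma activityWeight_congr (hL : ∀ c ∈ L, c e = 0) (hAB : A ∆ B = {e}) :
    activityWeight L A x y = activityWeight L B x y := by
  refine Finset.prod_congr rfl fun a _ => ?_
  by_cases hae : a = e
  · have hinactive (C : Finset ι) : ¬ IsActive L C a :=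
      hae ▸ not_isActive_of_apply_eq_zero hL
    rw [if_neg (hinactive A), if_neg (hinactive B)]
  · exact if_congr (isActive_congr_of_apply_eq_zero hL hAB)
      (if_congr (mem_iff_of_symmDiff_eq_singleton hAB hae) rfl rfl) rfl

lemma activityWeight_deletion_congr (hAB : A ∆ B = {e}) :
    activityWeight (deletion e L) A x y = activityWeight (deletion e L) B x y :=
  activityWeight_congr (apply_eq_zero_of_mem_deletion e L) hAB

lemma activityWeight_contraction_congr (hAB : A ∆ B = {e}) :
    activityWeight (contraction e L) A x y = activityWeight (contraction e L) B x y :=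
  activityWeight_congr (apply_eq_zero_of_mem_contraction e L) hAB

lemma activityWeight_bot : activityWeight (⊥ : Submodule 𝕜 (ι → 𝕜)) A x y = 1 :=
  Finset.prod_eq_one fun a _ => if_neg <| not_isActive_of_apply_eq_zero fun c hc => by
    rw [(Submodule.mem_bot 𝕜).1 hc, Pi.zero_apply]

lemma activityWeight_eq_pow_mul_pow :
    activityWeight L A x y =
      x ^ {a | a ∉ A ∧ IsActive L A a}.ncard * y ^ {a | a ∈ A ∧ IsActive L A a}.ncard := by
  classical
  have hprod (p : ι → Prop) (z : R) : ∏ a, (if p a then z else 1) = z ^ {a | p a}.ncard := by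
    rw [Finset.prod_ite, Finset.prod_const, Finset.prod_const_one, mul_one,
      ← Set.ncard_coe_finset, Finset.coe_filter_univ]
  rw [← hprod, ← hprod, ← Finset.prod_mul_distrib]
  refine Finset.prod_congr rfl fun a _ => ?_
  by_cases hL : IsActive L A a <;> by_cases hA : a ∈ A <;> simp [hL, hA]

variable [IsStrictOrderedRing 𝕜]

open Classical in
lemma activityWeight_eq_mul (hL : L ≤ spanSubset 𝕜 (Set.Iic e)) (hM : ∀ c ∈ M, c e = 0)
    (hLM : ∀ a ≠ e, IsActive L A a ↔ IsActive M A a) :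
    activityWeight L A x y =
      (if single e (1 : 𝕜) ∈ L then if e ∈ A then y else x else 1) * activityWeight M A x y := by
  unfold activityWeight
  rw [← Finset.mul_prod_erase Finset.univ _ (Finset.mem_univ e),
    ← Finset.mul_prod_erase Finset.univ _ (Finset.mem_univ e),
    if_neg (not_isActive_of_apply_eq_zero hM), one_mul]
  congr 1
  · simp only [isActive_greatest_iff hL]
  · exact Finset.prod_congr rfl fun a ha => by simp only [hLM a (Finset.ne_of_mem_erase ha)]

open Classical in
lemma IsDeletionSide.activityWeight_eq_mul_deletion (h : IsDeletionSide e L A)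
    (hL : L ≤ spanSubset 𝕜 (Set.Iic e)) :
    activityWeight L A x y = (if single e (1 : 𝕜) ∈ L then if e ∈ A then y else x else 1) *
      activityWeight (deletion e L) A x y :=
  activityWeight_eq_mul hL (apply_eq_zero_of_mem_deletion e L) fun _ => h.isActive_iff_deletion

open Classical in
lemma IsDeletionSide.activityWeight_eq_mul_contraction (h : IsDeletionSide e L A)
    (hL : L ≤ spanSubset 𝕜 (Set.Iic e)) (hAB : A ∆ B = {e}) :
    activityWeight L B x y = (if single e (1 : 𝕜) ∈ L then if e ∈ B then y else x else 1) *
      activityWeight (contraction e L) B x y :=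
  activityWeight_eq_mul hL (apply_eq_zero_of_mem_contraction e L) fun _ =>
    h.isActive_iff_contraction hL hAB

end CommSemiring

variable [IsStrictOrderedRing 𝕜] [CommRing R] {x y u w : R}

lemma Orthogonal.activityWeight_add_of_isDeletionSide (h : Orthogonal K L)
    (hK : K ≤ spanSubset 𝕜 (Set.Iic e)) (hL : L ≤ spanSubset 𝕜 (Set.Iic e)) (hAB : A ∆ B = {e})
    (hKA : IsDeletionSide e K A) (hLB : IsDeletionSide e L B) :
    activityWeight K A x u * activityWeight L A y w +
        activityWeight K B x u * activityWeight L B y w =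
      (x + u - 1) ^ nullityOn K {e} *
        (activityWeight (contraction e K) A x u * activityWeight (deletion e L) A y w) +
      (y + w - 1) ^ nullityOn L {e} *
        (activityWeight (deletion e K) A x u * activityWeight (contraction e L) A y w) := by
  rw [hKA.activityWeight_eq_mul_deletion hK, hKA.activityWeight_eq_mul_contraction hK hAB,
    hLB.activityWeight_eq_mul_deletion hL,
    hLB.activityWeight_eq_mul_contraction hL (symmDiff_comm A B ▸ hAB),
    ← activityWeight_contraction_congr hAB, ← activityWeight_deletion_congr hAB]
  have hmem := mem_iff_notMem_of_symmDiff_eq_singleton hAB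
  by_cases heK : single e (1 : 𝕜) ∈ K
  · have heL : single e (1 : 𝕜) ∉ L := h.symm.single_notMem heK
    rw [contraction_eq_deletion_of_single_mem heK,
      contraction_eq_deletion_of_apply_eq_zero (h.symm.apply_eq_zero heK),
      nullityOn_singleton_of_mem heK, nullityOn_singleton_of_notMem heL]
    by_cases heB : e ∈ B <;> simp only [heK, heL, hmem, heB, not_true_eq_false,
      not_false_eq_true, if_true, if_false] <;> ring
  by_cases heL : single e (1 : 𝕜) ∈ L
  · rw [contraction_eq_deletion_of_single_mem heL,
      contraction_eq_deletion_of_apply_eq_zero (h.apply_eq_zero heL),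
      nullityOn_singleton_of_mem heL, nullityOn_singleton_of_notMem heK]
    by_cases heB : e ∈ B <;> simp only [heK, heL, hmem, heB, not_true_eq_false,
      not_false_eq_true, if_true, if_false] <;> ring
  · rw [nullityOn_singleton_of_notMem heK, nullityOn_singleton_of_notMem heL, if_neg heK,
      if_neg heL, if_neg heK, if_neg heL]
    ring

lemma Orthogonal.activityWeight_add (h : Orthogonal K L) (hK : K ≤ spanSubset 𝕜 (Set.Iic e))
    (hL : L ≤ spanSubset 𝕜 (Set.Iic e)) (hAB : A ∆ B = {e}) :
    activityWeight K A x u * activityWeight L A y w +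
        activityWeight K B x u * activityWeight L B y w =
      (x + u - 1) ^ nullityOn K {e} *
        (activityWeight (contraction e K) A x u * activityWeight (deletion e L) A y w) +
      (y + w - 1) ^ nullityOn L {e} *
        (activityWeight (deletion e K) A x u * activityWeight (contraction e L) A y w) := by
  rcases h.exists_opposite_isDeletionSide hAB with ⟨hKA, hLB⟩ | ⟨hKB, hLA⟩
  · exact h.activityWeight_add_of_isDeletionSide hK hL hAB hKA hLB
  · rw [add_comm, h.activityWeight_add_of_isDeletionSide hK hL (symmDiff_comm A B ▸ hAB) hKB hLA,
      activityWeight_deletion_congr hAB, activityWeight_deletion_congr hAB,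
      activityWeight_contraction_congr hAB, activityWeight_contraction_congr hAB]

lemma Orthogonal.activitySum_insert (h : Orthogonal K L) (he : e ∉ s)
    (hK : K ≤ spanSubset 𝕜 (Set.Iic e)) (hL : L ≤ spanSubset 𝕜 (Set.Iic e)) :
    activitySum (insert e s) K L x u y w =
      (x + u - 1) ^ nullityOn K {e} *
        activitySum s (contraction e K) (deletion e L) x u y w +
      (y + w - 1) ^ nullityOn L {e} *
        activitySum s (deletion e K) (contraction e L) x u y w := by
  unfold activitySum
  rw [Finset.sum_powerset_insert he, ← Finset.sum_add_distrib, Finset.mul_sum, Finset.mul_sum,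
    ← Finset.sum_add_distrib]
  refine Finset.sum_congr rfl fun A hA => ?_
  have heA : e ∉ A := fun heA => he (Finset.mem_powerset.1 hA heA)
  exact h.activityWeight_add hK hL (symmDiff_insert_self heA)

theorem Orthogonal.subspaceTutte_eq_activitySum (h : Orthogonal K L)
    (hK : K ≤ spanSubset 𝕜 (s : Set ι)) (hL : L ≤ spanSubset 𝕜 (s : Set ι)) :
    subspaceTutte s K L (x + u - 1) (y + w - 1) = activitySum s K L x u y w := by
  induction s using Finset.induction_on_max generalizing K L with
  | empty =>
    have hbot : spanSubset 𝕜 ((∅ : Finset ι) : Set ι) = ⊥ := by simp [spanSubset]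
    obtain rfl : K = ⊥ := le_bot_iff.1 (hbot ▸ hK)
    obtain rfl : L = ⊥ := le_bot_iff.1 (hbot ▸ hL)
    simp [subspaceTutte, activitySum, nullityOn_bot, activityWeight_bot]
  | insert e s hlt ih =>
    have he : e ∉ s := fun hes => (hlt e hes).false
    have hIic : spanSubset 𝕜 ((insert e s : Finset ι) : Set ι) ≤ spanSubset 𝕜 (Set.Iic e) :=
      span_mono <| Set.image_mono fun i hi => by
        rcases Finset.mem_insert.1 hi with rfl | his
        exacts [le_rfl, (hlt i his).le]
    rw [subspaceTutte_insert he, h.activitySum_insert he (hK.trans hIic) (hL.trans hIic),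
      ih h.contraction_deletion (contraction_le_spanSubset hK) (deletion_le_spanSubset hL),
      ih h.deletion_contraction (deletion_le_spanSubset hK) (contraction_le_spanSubset hL)]

end ActivitySum

section Configuration

variable {ι 𝕜 V W : Type*} [Field 𝕜] [AddCommGroup V] [Module 𝕜 V] [AddCommGroup W] [Module 𝕜 W]

variable (𝕜) in
/-- The space of vectors `i ↦ f (v i)` with `f` a linear functional. Its nonzero elements of minimal
support are the signed cocircuits of the configuration `v`. -/
def valueVectors (v : ι → V) : Submodule 𝕜 (ι → 𝕜) :=
  LinearMap.range (LinearMap.pi fun i => Dual.eval 𝕜 V (v i))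

lemma mem_valueVectors {v : ι → V} {c : ι → 𝕜} :
    c ∈ valueVectors 𝕜 v ↔ ∃ f : Dual 𝕜 V, ⇑f ∘ v = c :=
  Iff.rfl

lemma finrank_valueVectors [Finite ι] (v : ι → V) :
    finrank 𝕜 (valueVectors 𝕜 v) = finrank 𝕜 (span 𝕜 (Set.range v)) := by
  classical
  have := Fintype.ofFinite ι
  let evalBasis : Dual 𝕜 (ι → 𝕜) ≃ₗ[𝕜] (ι → 𝕜) := ((Pi.basisFun 𝕜 ι).constr 𝕜).symm
  have hrange : valueVectors 𝕜 v =
      (LinearMap.range (Fintype.linearCombination 𝕜 v).dualMap).map evalBasis.toLinearMap := by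
    rw [← LinearMap.range_comp]
    unfold valueVectors
    congr 1
    ext f i
    simp [evalBasis, Basis.constr_symm_apply, Fintype.linearCombination_apply_single]
  rw [hrange, evalBasis.finrank_map_eq, LinearMap.finrank_range_dualMap_eq_finrank_range,
    Fintype.range_linearCombination]

lemma nullityOn_valueVectors_compl_add [Finite ι] (v : ι → V) (A : Set ι) :
    finrank 𝕜 (span 𝕜 (v '' A)) + nullityOn (valueVectors 𝕜 v) Aᶜ =
      finrank 𝕜 (span 𝕜 (Set.range v)) := by
  let restrict : (ι → 𝕜) →ₗ[𝕜] (A → 𝕜) := LinearMap.funLeft 𝕜 𝕜 Subtype.val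
  have hmap : (valueVectors 𝕜 v).map restrict = valueVectors 𝕜 (v ∘ (Subtype.val : A → ι)) :=
    (LinearMap.range_comp _ _).symm
  have hker : LinearMap.ker restrict = spanSubset 𝕜 Aᶜ := by
    ext c
    simp [restrict, funext_iff, mem_spanSubset_iff, LinearMap.funLeft_apply]
  rw [nullityOn, ← finrank_valueVectors, ← hker,
    ← finrank_map_add_finrank_inf_ker restrict (valueVectors 𝕜 v), hmap, finrank_valueVectors,
    Set.range_comp, Subtype.range_coe]

variable [Fintype ι]

variable (𝕜) in
/-- The space of linear dependencies of the configuration `v`. Its nonzero elements of minimal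
support are the signed circuits of `v`. -/
def dependencies (v : ι → V) : Submodule 𝕜 (ι → 𝕜) :=
  LinearMap.ker (Fintype.linearCombination 𝕜 v)

lemma mem_dependencies {v : ι → V} {c : ι → 𝕜} : c ∈ dependencies 𝕜 v ↔ ∑ i, c i • v i = 0 :=
  Iff.rfl

lemma nullityOn_dependencies_add (v : ι → V) (A : Set ι) :
    finrank 𝕜 (span 𝕜 (v '' A)) + nullityOn (dependencies 𝕜 v) A = A.ncard := by
  classical
  have hmap : (spanSubset 𝕜 A).map (Fintype.linearCombination 𝕜 v) = span 𝕜 (v '' A) := by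
    rw [spanSubset, map_span, Set.image_image]
    simp [Fintype.linearCombination_apply_single]
  rw [nullityOn, inf_comm, ← hmap, dependencies, finrank_map_add_finrank_inf_ker, dim_spanSubset]

lemma orthogonal_valueVectors_dependencies (v : ι → V) (π : V →ₗ[𝕜] W) :
    Orthogonal (valueVectors 𝕜 (π ∘ v)) (dependencies 𝕜 v) := by
  intro k hk l hl
  obtain ⟨f, rfl⟩ := mem_valueVectors.1 hk
  calc (⇑f ∘ π ∘ v) ⬝ᵥ l = f (π (∑ i, l i • v i)) := by
        simp [dotProduct, map_sum, mul_comm]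
    _ = 0 := by rw [mem_dependencies.1 hl, map_zero, map_zero]

end Configuration

section Reorientation

variable {n : ℕ} {V : Type*} [AddCommGroup V] {A : Finset (Fin n)} {a : Fin n}

lemma reorient_reorient (v : Fin n → V) (A : Finset (Fin n)) :
    reorient (reorient v A) A = v := by
  ext i
  by_cases hi : i ∈ A <;> simp [reorient, hi]

lemma isConformal_reorient {c : Fin n → ℝ} : IsConformal A (reorient c A) ↔ ∀ i, 0 ≤ c i := by
  refine forall_congr' fun i => ?_
  by_cases hi : i ∈ A <;> simp [reorient, hi]

lemma reorient_apply_eq_zero {v : Fin n → V} {i : Fin n} : reorient v A i = 0 ↔ v i = 0 := by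
  by_cases hi : i ∈ A <;> simp [reorient, hi]

lemma isActive_iff_exists_reorient_mem {L : Submodule ℝ (Fin n → ℝ)} :
    IsActive L A a ↔
      ∃ c : Fin n → ℝ, reorient c A ∈ L ∧ (∀ i, 0 ≤ c i) ∧ 0 < c a ∧ ∀ i < a, c i = 0 := by
  have hinvolutive : Function.Involutive (reorient · A : (Fin n → ℝ) → Fin n → ℝ) :=
    fun c => reorient_reorient c A
  unfold IsActive
  rw [hinvolutive.surjective.exists]
  simp only [isConformal_reorient, ne_eq, reorient_apply_eq_zero]
  refine exists_congr fun c => and_congr_right fun _ => and_congr_right fun hc => ?_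
  rw [(hc a).lt_iff_ne', ne_eq]

variable [Module ℝ V]

lemma oActive_reorient_iff {v : Fin n → V} :
    OActive (reorient v A) a ↔ IsActive (dependencies ℝ v) A a := by
  have hsum (c : Fin n → ℝ) : ∑ i, c i • reorient v A i = ∑ i, reorient c A i • v i := by
    refine Finset.sum_congr rfl fun i _ => ?_
    by_cases hi : i ∈ A <;> simp [reorient, hi]
  rw [isActive_iff_exists_reorient_mem]
  refine exists_congr fun c => ?_
  rw [mem_dependencies, hsum]
  tauto

lemma oDualActive_reorient_iff {v : Fin n → V} :
    ODualActive (reorient v A) a ↔ IsActive (valueVectors ℝ v) A a := by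
  have hcomp (f : V →ₗ[ℝ] ℝ) : ⇑f ∘ reorient v A = reorient (⇑f ∘ v) A := by
    ext i
    by_cases hi : i ∈ A <;> simp [reorient, hi]
  rw [isActive_iff_exists_reorient_mem]
  constructor
  · rintro ⟨f, hf⟩
    refine ⟨⇑f ∘ reorient v A, mem_valueVectors.2 ⟨f, ?_⟩, hf⟩
    rw [hcomp, reorient_reorient]
  · rintro ⟨c, hcL, hc⟩
    obtain ⟨f, hf⟩ := mem_valueVectors.1 hcL
    obtain rfl : ⇑f ∘ reorient v A = c := by rw [hcomp, hf, reorient_reorient]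
    exact ⟨f, hc⟩

lemma activityWeight_dependencies (v : Fin n → V) (A : Finset (Fin n)) (y w : ℝ) :
    activityWeight (dependencies ℝ v) A y w = y ^ theta v A * w ^ thetaBar v A := by
  simp only [activityWeight_eq_pow_mul_pow, theta, thetaBar, oActive_reorient_iff]

lemma activityWeight_valueVectors (v : Fin n → V) (A : Finset (Fin n)) (x u : ℝ) :
    activityWeight (valueVectors ℝ v) A x u = x ^ thetaStar v A * u ^ thetaStarBar v A := by
  simp only [activityWeight_eq_pow_mul_pow, thetaStar, thetaStarBar, oDualActive_reorient_iff]

lemma tuttePerspV_eq_subspaceTutte {W : Type*} [AddCommGroup W] [Module ℝ W] (v : Fin n → V)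
    (v' : Fin n → W) (x y : ℝ) :
    tuttePerspV v v' x y =
      subspaceTutte Finset.univ (valueVectors ℝ v') (dependencies ℝ v) (x - 1) (y - 1) := by
  unfold tuttePerspV subspaceTutte
  rw [Finset.powerset_univ]
  refine Finset.sum_congr rfl fun A _ => ?_
  have hvalue := nullityOn_valueVectors_compl_add (𝕜 := ℝ) v' (A : Set (Fin n))
  have hdep := nullityOn_dependencies_add (𝕜 := ℝ) v (A : Set (Fin n))
  rw [Set.ncard_coe_finset] at hdep
  rw [vrank, vrank, vrank, Set.image_univ, ← hvalue, ← hdep, Nat.add_sub_cancel_left,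
    Nat.add_sub_cancel_left]

end Reorientation

end Perspective

open Perspective in
theorem statement15_general {n : ℕ} {V W : Type*} [AddCommGroup V] [Module ℝ V]
    [AddCommGroup W] [Module ℝ W] (v : Fin n → V) (π : V →ₗ[ℝ] W) (x u y w : ℝ) :
    tuttePerspV v (π ∘ v) (x + u) (y + w) =
      ∑ A : Finset (Fin n), x ^ thetaStar (π ∘ v) A * u ^ thetaStarBar (π ∘ v) A *
        (y ^ theta v A * w ^ thetaBar v A) := by
  have htop : Pi.spanSubset ℝ ((Finset.univ : Finset (Fin n)) : Set (Fin n)) = ⊤ := by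
    rw [Finset.coe_univ, Pi.spanSubset, Set.image_univ, Module.Basis.span_eq]
  rw [tuttePerspV_eq_subspaceTutte,
    (orthogonal_valueVectors_dependencies v π).subspaceTutte_eq_activitySum (htop ▸ le_top)
      (htop ▸ le_top), activitySum, Finset.powerset_univ]
  simp only [activityWeight_valueVectors, activityWeight_dependencies]

/-- alternating-sum expression for `t(M,M';0,0,1)`:
`t(M,M'; 0, 0, 1) = ∑_A (-1)^(θ*_{M'}(A) + θ_M(A))`. -/
theorem statement15 {n : ℕ} {V W : Type*} [AddCommGroup V] [Module ℝ V] [FiniteDimensional ℝ V]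
    [AddCommGroup W] [Module ℝ W] [FiniteDimensional ℝ W]
    (v : Fin n → V) (π : V →ₗ[ℝ] W) :
    tuttePerspV v (π ∘ v) 0 0 =
      ∑ A : Finset (Fin n), (-1 : ℝ) ^ (thetaStar (π ∘ v) A + theta v A) := by
  simpa [pow_add] using statement15_general v π (-1) 1 (-1) 1
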